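/- For every real number Q ≥ 1, every real number x ≥ 16, and every natural number S, if 2^(−Q) · (x / log₂ x)^(S/Q) ≤ x, then S ≤ Q² + 2Q. -/

import Mathlib

/-!
For `x ≥ 16` we have `log₂ x ≤ √x`, with equality at `16`, because `log x / √x` decreases from
`e²` on. Hence `√x ≤ x / log₂ x`, so for `S ≥ 0` the hypothesis gives
`2 ^ (-Q) * √x ^ (S / Q) ≤ x`. Taking base-two logarithms, `S / Q ≤ 2 * (1 + Q / log₂ x)`,
where `log₂ x ≥ 4`.
-/

theorem logb_div_sqrt_antitoneOn {b : ℝ} (hb : 1 < b) :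
    AntitoneOn (fun x ↦ Real.logb b x / √x) (Set.Ici (Real.exp 2)) := by
  intro x hx y hy hxy
  have log_div_sqrt_le : Real.log y / √y ≤ Real.log x / √x :=
    Real.log_div_sqrt_antitoneOn hx hy hxy
  simp only [Real.logb, div_right_comm _ (Real.log b)]
  exact div_le_div_of_nonneg_right log_div_sqrt_le (Real.log_pos hb).le

theorem logb_two_sixteen : Real.logb 2 16 = 4 := by
  rw [show (16 : ℝ) = 2 ^ (4 : ℝ) by norm_num, Real.logb_rpow (by norm_num) (by norm_num)]

theorem logb_two_le_sqrt {x : ℝ} (hx : 16 ≤ x) : Real.logb 2 x ≤ √x := by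
  have exp_two_le : Real.exp 2 ≤ 16 := calc
    Real.exp 2 = Real.exp 1 ^ 2 := by rw [← Real.exp_nat_mul]; norm_num
    _ ≤ 3 ^ 2 := by gcongr; exact Real.exp_one_lt_three.le
    _ ≤ 16 := by norm_num
  have sqrt_sixteen : √(16 : ℝ) = 4 := by
    rw [show (16 : ℝ) = 4 ^ 2 by norm_num, Real.sqrt_sq (by norm_num)]
  have ratio_le_one : Real.logb 2 x / √x ≤ 1 := calc
    Real.logb 2 x / √x ≤ Real.logb 2 16 / √16 :=
      logb_div_sqrt_antitoneOn one_lt_two exp_two_le (exp_two_le.trans hx) hx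
    _ = 1 := by rw [logb_two_sixteen, sqrt_sixteen, div_self four_ne_zero]
  exact (div_le_one (Real.sqrt_pos.mpr (by linarith))).mp ratio_le_one

theorem sqrt_le_div_logb_two {x : ℝ} (hx : 16 ≤ x) : √x ≤ x / Real.logb 2 x := calc
  √x = x / √x := Real.div_sqrt.symm
  _ ≤ x / Real.logb 2 x :=
    div_le_div_of_nonneg_left (by linarith) (Real.logb_pos one_lt_two (by linarith))
      (logb_two_le_sqrt hx)

theorem le_two_mul_one_add_div_logb_of_rpow_mul_rpow_le {b x y Q t : ℝ} (hb : 1 < b)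
    (hx : 1 < x) (ht : 0 ≤ t) (hy : √x ≤ y) (h : b ^ (-Q) * y ^ t ≤ x) :
    t ≤ 2 * (1 + Q / Real.logb b x) := by
  have b_pos : 0 < b := by linarith
  have sqrt_pos : 0 < √x := Real.sqrt_pos.mpr (by linarith)
  have logb_pos : 0 < Real.logb b x := Real.logb_pos hb hx
  have logb_sqrt : Real.logb b √x = Real.logb b x / 2 := by
    rw [Real.logb, Real.log_sqrt (by linarith), div_right_comm, Real.log_div_log]
  have sqrt_bound : b ^ (-Q) * √x ^ t ≤ x := le_trans (by gcongr) h
  have logb_bound : -Q + t * (Real.logb b x / 2) ≤ Real.logb b x := calc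
    -Q + t * (Real.logb b x / 2) = Real.logb b (b ^ (-Q) * √x ^ t) := by
      rw [Real.logb_mul (by positivity) (by positivity), Real.logb_rpow b_pos hb.ne',
        Real.logb_rpow_eq_mul_logb_of_pos sqrt_pos, logb_sqrt]
    _ ≤ Real.logb b x := Real.logb_le_logb_of_le hb (by positivity) sqrt_bound
  rw [one_add_div logb_pos.ne', ← mul_div_assoc, le_div_iff₀ logb_pos]
  linarith

theorem stmt_0_general {Q x S : ℝ} (hQ : 0 < Q) (hx : 16 ≤ x)
    (h : (2 : ℝ) ^ (-Q) * (x / Real.logb 2 x) ^ (S / Q) ≤ x) :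
    S ≤ Q ^ 2 / 2 + 2 * Q := by
  rcases le_total S 0 with S_nonpos | S_nonneg
  · exact S_nonpos.trans (by positivity)
  have four_le_logb : 4 ≤ Real.logb 2 x :=
    logb_two_sixteen ▸ Real.logb_le_logb_of_le one_lt_two (by norm_num) hx
  have exponent_le : S / Q ≤ 2 * (1 + Q / 4) := calc
    S / Q ≤ 2 * (1 + Q / Real.logb 2 x) :=
      le_two_mul_one_add_div_logb_of_rpow_mul_rpow_le one_lt_two (by linarith)
        (by positivity) (sqrt_le_div_logb_two hx) h
    _ ≤ 2 * (1 + Q / 4) := by gcongr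
  calc
    S ≤ 2 * (1 + Q / 4) * Q := (div_le_iff₀ hQ).mp exponent_le
    _ = Q ^ 2 / 2 + 2 * Q := by ring

/-- For every real `Q ≥ 1`, every real `x ≥ 16`, and every natural number `S`,
if `2^(−Q) · (x / log₂ x)^(S/Q) ≤ x`, then `S ≤ Q² + 2Q`. -/
theorem stmt_0 (Q x : ℝ) (hQ : 1 ≤ Q) (hx : 16 ≤ x) (S : ℕ)
    (h : (2 : ℝ) ^ (-Q) * (x / Real.logb 2 x) ^ ((S : ℝ) / Q) ≤ x) :
    (S : ℝ) ≤ Q ^ 2 + 2 * Q := by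
  have sharp_bound : (S : ℝ) ≤ Q ^ 2 / 2 + 2 * Q := stmt_0_general (by linarith) hx h
  linarith [sq_nonneg Q]
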